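/- ∫₀¹ ₂F₁(1/3,2/3;1|x)·₂F₁(1/3,2/3;1|1−x)·(1−x)^{−1/2} dx = 3·₄F₃(1/3,1/2,1/2,2/3; 5/6,1,7/6 | 1). -/

import Mathlib

open Real MeasureTheory Set

/-- Modified Bessel function `I₀(t) = (1/π)∫₀^π exp(t cos θ) dθ`. -/
noncomputable def I0 (t : ℝ) : ℝ := (1 / π) * ∫ θ in (0:ℝ)..π, exp (t * cos θ)

/-- Modified Bessel function `K₀(t) = ∫₀^∞ exp(−t cosh u) du`. -/
noncomputable def K0 (t : ℝ) : ℝ := ∫ u in Ioi (0:ℝ), exp (-(t * Real.cosh u))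

/-- Rising factorial `(a)ₙ = a(a+1)⋯(a+n−1)`. -/
noncomputable def ris (a : ℝ) (n : ℕ) : ℝ := ∏ k ∈ Finset.range n, (a + k)

/-- Generalized hypergeometric series `ₚF_q(a; b | x)`. -/
noncomputable def pFq (a b : List ℝ) (x : ℝ) : ℝ :=
  ∑' n : ℕ, ((a.map fun p => ris p n).prod / (b.map fun q => ris q n).prod) * x ^ n
    / (n.factorial : ℝ)

/-!
Expand the factor `₂F₁(1/3, 2/3; 1 | 1 - x)` in powers of `1 - x`. Integrating `₂F₁(a, b; c | x)`
against `x ^ (c - 1) * (1 - x) ^ (s - 1)` term by term gives a beta function times a `₂F₁` at `1`,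
which Gauss's theorem evaluates as a quotient of Gamma functions. Replacing `s` by `s + n`
multiplies this quotient by rising factorials, so the remaining sum over `n` is again
hypergeometric at `1`. The constant `Γ(1/2)² / (Γ(5/6) Γ(7/6)) = 3` comes from the reflection
formula.
-/

open Asymptotics Filter ProbabilityTheory

lemma ris_pos {a : ℝ} (ha : 0 < a) (n : ℕ) : 0 < ris a n :=
  Finset.prod_pos fun k _ => by positivity

lemma ris_succ (a : ℝ) (n : ℕ) : ris a (n + 1) = ris a n * (a + n) :=
  Finset.prod_range_succ _ n

lemma Gamma_add_natCast {a : ℝ} (ha : 0 < a) (n : ℕ) : Gamma (a + n) = ris a n * Gamma a := by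
  induction n with
  | zero => simp [ris]
  | succ n ih =>
    rw [ris_succ, Nat.cast_succ, ← add_assoc, Gamma_add_one (by positivity), ih]
    ring

lemma ascPochhammer_eval_eq_ris (a : ℝ) (n : ℕ) : (ascPochhammer ℝ n).eval a = ris a n := by
  induction n with
  | zero => simp [ris]
  | succ n ih => rw [ascPochhammer_succ_eval, ih, ris_succ]

lemma ringChoose_add_natCast_sub_one (a : ℝ) (n : ℕ) :
    Ring.choose (a + n - 1) n = ris a n / n.factorial := by
  rw [← Ring.multichoose_eq, eq_div_iff (by positivity), mul_comm, ← nsmul_eq_mul,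
    Ring.factorial_nsmul_multichoose_eq_ascPochhammer, Polynomial.ascPochhammer_smeval_eq_eval,
    ascPochhammer_eval_eq_ris]

lemma hasSum_ris_div_factorial_mul_pow (a : ℝ) {x : ℝ} (hx : |x| < 1) :
    HasSum (fun n => ris a n / n.factorial * x ^ n) ((1 - x) ^ (-a)) := by
  have hball : x ∈ Metric.eball (0 : ℝ) 1 := by
    simpa [Metric.mem_eball, edist_eq_enorm_sub, enorm_eq_nnnorm, ← NNReal.coe_lt_coe] using hx
  have hsum := (one_div_one_sub_rpow_hasFPowerSeriesOnBall_zero a).hasSum_sub hball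
  have hx1 : 0 ≤ 1 - x := by linarith [le_abs_self x]
  simpa [FormalMultilinearSeries.ofScalars, ringChoose_add_natCast_sub_one, rpow_neg hx1]
    using hsum

lemma isTheta_ris_succ {a : ℝ} (ha : 0 < a) :
    (fun n : ℕ => ris a (n + 1)) =Θ[atTop] fun n => (n : ℝ) ^ a * n.factorial := by
  have hΓ : GammaSeq a =Θ[atTop] fun _ => (1 : ℝ) :=
    ((isEquivalent_const_iff_tendsto (Gamma_pos_of_pos ha).ne').mpr
      (GammaSeq_tendsto_Gamma a)).isTheta.trans
        (isTheta_const_const (Gamma_pos_of_pos ha).ne' one_ne_zero)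
  have hris : (fun n : ℕ => ris a (n + 1)) =ᶠ[atTop]
      fun n => (n : ℝ) ^ a * n.factorial / GammaSeq a n := by
    filter_upwards [eventually_gt_atTop 0] with n hn
    have : (0 : ℝ) < n := by exact_mod_cast hn
    rw [GammaSeq, ← ris, div_div_cancel₀ (by positivity)]
  simpa using hris.trans_isTheta ((isTheta_refl _ _).div hΓ)

lemma isTheta_prod_map_ris_succ {l : List ℝ} (hl : ∀ p ∈ l, 0 < p) :
    (fun n : ℕ => (l.map fun p => ris p (n + 1)).prod) =Θ[atTop]
      fun n => (n : ℝ) ^ l.sum * (n.factorial : ℝ) ^ l.length := by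
  induction l with
  | nil => simp
  | cons p l ih =>
    obtain ⟨hp, hl⟩ := List.forall_mem_cons.mp hl
    simp only [List.map_cons, List.prod_cons]
    refine ((isTheta_ris_succ hp).mul (ih hl)).trans_eventuallyEq ?_
    filter_upwards [eventually_gt_atTop 0] with n hn
    have : (0 : ℝ) < n := by exact_mod_cast hn
    rw [List.sum_cons, List.length_cons, rpow_add this]
    ring

/-- The coefficient of `x ^ n` in the hypergeometric series `pFq l m x`, with the factor `1 / n!`
included. -/
noncomputable def pFqCoeff (l m : List ℝ) (n : ℕ) : ℝ :=
  (l.map fun p => ris p n).prod / (m.map fun q => ris q n).prod / n.factorial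

lemma pFqCoeff_cons_left (p : ℝ) (l m : List ℝ) (n : ℕ) :
    pFqCoeff (p :: l) m n = ris p n * pFqCoeff l m n := by
  simp only [pFqCoeff, List.map_cons, List.prod_cons]
  ring

lemma pFqCoeff_cons_right (l : List ℝ) (q : ℝ) (m : List ℝ) (n : ℕ) :
    pFqCoeff l (q :: m) n = pFqCoeff l m n / ris q n := by
  simp only [pFqCoeff, List.map_cons, List.prod_cons]
  ring

lemma pFq_eq_tsum (l m : List ℝ) (x : ℝ) : pFq l m x = ∑' n, pFqCoeff l m n * x ^ n := by
  simp only [pFq, pFqCoeff, div_mul_eq_mul_div]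

lemma pFq_congr_perm {l l' m m' : List ℝ} (hl : l.Perm l') (hm : m.Perm m') (x : ℝ) :
    pFq l m x = pFq l' m' x := by
  simp only [pFq, (hl.map _).prod_eq, (hm.map _).prod_eq]

lemma prod_map_ris_nonneg {l : List ℝ} (hl : ∀ p ∈ l, 0 < p) (n : ℕ) :
    0 ≤ (l.map fun p => ris p n).prod :=
  List.prod_nonneg (List.forall_mem_map.mpr fun p hp => (ris_pos (hl p hp) n).le)

lemma pFqCoeff_nonneg {l m : List ℝ} (hl : ∀ p ∈ l, 0 < p) (hm : ∀ q ∈ m, 0 < q) (n : ℕ) :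
    0 ≤ pFqCoeff l m n :=
  div_nonneg (div_nonneg (prod_map_ris_nonneg hl n) (prod_map_ris_nonneg hm n)) (by positivity)

lemma pFq_nonneg {l m : List ℝ} (hl : ∀ p ∈ l, 0 < p) (hm : ∀ q ∈ m, 0 < q) {x : ℝ}
    (hx : 0 ≤ x) : 0 ≤ pFq l m x := by
  rw [pFq_eq_tsum]
  exact tsum_nonneg fun n => mul_nonneg (pFqCoeff_nonneg hl hm n) (pow_nonneg hx n)

lemma summable_pFqCoeff {l m : List ℝ} (hl : ∀ p ∈ l, 0 < p) (hm : ∀ q ∈ m, 0 < q)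
    (hlen : l.length = m.length + 1) (hsum : l.sum < m.sum) : Summable (pFqCoeff l m) := by
  have hpow : Summable fun n : ℕ => (n : ℝ) ^ (l.sum - m.sum - 1) :=
    summable_nat_rpow.mpr (by linarith)
  have hcoeff : (fun n => pFqCoeff l m (n + 1)) =Θ[atTop] fun n : ℕ =>
      (n : ℝ) ^ l.sum * (n.factorial : ℝ) ^ l.length /
        ((n : ℝ) ^ m.sum * (n.factorial : ℝ) ^ m.length) / (n + 1).factorial :=
    ((isTheta_prod_map_ris_succ hl).div (isTheta_prod_map_ris_succ hm)).div (isTheta_refl _ _)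
  refine (summable_nat_add_iff 1).mp (summable_of_isBigO_nat hpow (hcoeff.isBigO.trans ?_))
  refine IsBigO.of_bound 1 ?_
  filter_upwards [eventually_gt_atTop 0] with n hn
  have hn : (0 : ℝ) < n := by exact_mod_cast hn
  rw [norm_of_nonneg (by positivity), norm_of_nonneg (by positivity), one_mul, hlen, rpow_sub hn,
    rpow_sub hn, rpow_one, Nat.factorial_succ, pow_succ]
  calc _ = (n : ℝ) ^ l.sum / (n : ℝ) ^ m.sum / (n + 1) := by push_cast; field_simp
    _ ≤ _ := by gcongr; linarith

/-- The integrand of Euler's beta integral `B(p, q)`. -/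
noncomputable def betaKernel (p q x : ℝ) : ℝ := x ^ (p - 1) * (1 - x) ^ (q - 1)

lemma betaKernel_nonneg (p q : ℝ) {x : ℝ} (hx : x ∈ Ioo (0 : ℝ) 1) : 0 ≤ betaKernel p q x :=
  mul_nonneg (rpow_nonneg hx.1.le _) (rpow_nonneg (sub_nonneg.mpr hx.2.le) _)

lemma betaKernel_mul_pow (p q : ℝ) (n : ℕ) {x : ℝ} (hx : 0 < x) :
    betaKernel p q x * x ^ n = betaKernel (p + n) q x := by
  rw [betaKernel, betaKernel, add_sub_right_comm, rpow_add_natCast hx.ne']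
  ring

lemma betaKernel_mul_one_sub_rpow (p q r : ℝ) {x : ℝ} (hx : x < 1) :
    betaKernel p q x * (1 - x) ^ r = betaKernel p (q + r) x := by
  rw [betaKernel, betaKernel, add_sub_right_comm, rpow_add (sub_pos.mpr hx), mul_assoc]

lemma betaKernel_mul_one_sub_pow (p q : ℝ) (n : ℕ) {x : ℝ} (hx : x < 1) :
    betaKernel p q x * (1 - x) ^ n = betaKernel p (q + n) x := by
  rw [← betaKernel_mul_one_sub_rpow p q n hx, rpow_natCast]

lemma hasSum_ris_div_factorial_mul_betaKernel (a p q : ℝ) {x : ℝ} (hx : x ∈ Ioo (0 : ℝ) 1) :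
    HasSum (fun n : ℕ => ris a n / n.factorial * betaKernel (p + n) q x)
      (betaKernel p (q - a) x) := by
  have hbinom := hasSum_ris_div_factorial_mul_pow a (abs_lt.mpr ⟨by linarith [hx.1], hx.2⟩)
  rw [sub_eq_add_neg, ← betaKernel_mul_one_sub_rpow _ _ _ hx.2]
  simpa only [← betaKernel_mul_pow p q _ hx.1, mul_left_comm] using
    hbinom.mul_left (betaKernel p q x)

lemma ofReal_betaKernel (p q : ℝ) {x : ℝ} (hx : x ∈ Ioo (0 : ℝ) 1) :
    (x : ℂ) ^ ((p : ℂ) - 1) * (1 - (x : ℂ)) ^ ((q : ℂ) - 1) = (betaKernel p q x : ℂ) := by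
  rw [betaKernel, Complex.ofReal_mul, Complex.ofReal_cpow hx.1.le,
    Complex.ofReal_cpow (sub_nonneg.mpr hx.2.le)]
  push_cast
  rfl

lemma integrableOn_betaKernel {p q : ℝ} (hp : 0 < p) (hq : 0 < q) :
    IntegrableOn (betaKernel p q) (Ioo 0 1) := by
  have hconv := Complex.betaIntegral_convergent (u := p) (v := q) (by simpa) (by simpa)
  rw [intervalIntegrable_iff_integrableOn_Ioo_of_le zero_le_one] at hconv
  simpa [IntegrableOn] using
    (hconv.congr_fun (fun x hx => ofReal_betaKernel p q hx) measurableSet_Ioo).re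

lemma integral_betaKernel {p q : ℝ} (hp : 0 < p) (hq : 0 < q) :
    ∫ x in Ioo (0 : ℝ) 1, betaKernel p q x = beta p q := by
  rw [beta_eq_betaIntegralReal p q hp hq, Complex.betaIntegral,
    intervalIntegral.integral_of_le zero_le_one, integral_Ioc_eq_integral_Ioo,
    setIntegral_congr_fun measurableSet_Ioo (fun x hx => ofReal_betaKernel p q hx),
    integral_complex_ofReal, Complex.ofReal_re]

lemma beta_add_natCast_left {p q : ℝ} (hp : 0 < p) (hq : 0 < q) (n : ℕ) :
    beta (p + n) q = beta p q * (ris p n / ris (p + q) n) := by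
  rw [beta, beta, Gamma_add_natCast hp, add_right_comm, Gamma_add_natCast (add_pos hp hq)]
  ring

section TermwiseIntegration

variable {ι α : Type*} [Countable ι] [MeasurableSpace α] {μ : Measure α} {f : ι → α → ℝ}

lemma hasSum_integral_of_nonneg_of_integrable {F : α → ℝ}
    (hf : ∀ i, AEStronglyMeasurable (f i) μ) (hf0 : ∀ i, 0 ≤ᵐ[μ] f i) (hF : Integrable F μ)
    (hfF : ∀ᵐ x ∂μ, HasSum (f · x) (F x)) : HasSum (fun i => ∫ x, f i x ∂μ) (∫ x, F x ∂μ) :=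
  hasSum_integral_of_dominated_convergence f hf
    (fun i => (hf0 i).mono fun _ hx => (norm_of_nonneg hx).le)
    (hfF.mono fun _ hx => hx.summable)
    (hF.congr (hfF.mono fun _ hx => hx.tsum_eq.symm)) hfF

lemma integral_tsum_of_nonneg_of_summable_integral (hf : ∀ i, Integrable (f i) μ)
    (hf0 : ∀ i, 0 ≤ᵐ[μ] f i) (hsum : Summable fun i => ∫ x, f i x ∂μ) :
    ∫ x, ∑' i, f i x ∂μ = ∑' i, ∫ x, f i x ∂μ := by
  have hnorm (i : ι) : ∫ x, ‖f i x‖ ∂μ = ∫ x, f i x ∂μ :=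
    integral_congr_ae ((hf0 i).mono fun _ hx => norm_of_nonneg hx)
  exact (integral_tsum_of_summable_integral_norm hf (by simpa only [hnorm] using hsum)).symm

end TermwiseIntegration

/-- Gauss's summation theorem: integrate the binomial series of `(1 - x) ^ (-a)` against
`betaKernel b (c - b)`. -/
theorem hasSum_pFqCoeff_gauss {a b c : ℝ} (ha : 0 < a) (hb : 0 < b) (habc : a + b < c) :
    HasSum (pFqCoeff [a, b] [c])
      (Gamma c * Gamma (c - a - b) / (Gamma (c - a) * Gamma (c - b))) := by
  have hcb : 0 < c - b := by linarith
  have hbeta : 0 < beta b (c - b) := beta_pos hb hcb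
  have hterm (n : ℕ) : ∫ x in Ioo (0 : ℝ) 1, ris a n / n.factorial * betaKernel (b + n) (c - b) x =
      beta b (c - b) * pFqCoeff [a, b] [c] n := by
    rw [integral_const_mul, integral_betaKernel (by positivity) hcb, beta_add_natCast_left hb hcb,
      add_sub_cancel]
    simp only [pFqCoeff, List.map_cons, List.map_nil, List.prod_cons, List.prod_nil]
    ring
  have hsum := hasSum_integral_of_nonneg_of_integrable
    (fun n => ((integrableOn_betaKernel (by positivity) hcb).const_mul _).aestronglyMeasurable)
    (fun n => ae_restrict_of_forall_mem measurableSet_Ioo fun x hx =>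
      mul_nonneg (div_nonneg (ris_pos ha n).le (by positivity)) (betaKernel_nonneg _ _ hx))
    (integrableOn_betaKernel hb (show 0 < c - b - a by linarith))
    (ae_restrict_of_forall_mem measurableSet_Ioo fun x hx =>
      hasSum_ris_div_factorial_mul_betaKernel a b (c - b) hx)
  simp only [hterm, integral_betaKernel hb (show 0 < c - b - a by linarith)] at hsum
  have hval : beta b (c - b) * (Gamma c * Gamma (c - a - b) / (Gamma (c - a) * Gamma (c - b))) =
      beta b (c - b - a) := by
    have := (Gamma_pos_of_pos hcb).ne'
    have := (Gamma_pos_of_pos (show 0 < c by linarith)).ne'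
    simp only [beta, add_sub_cancel, sub_right_comm c b a, show b + (c - a - b) = c - a by ring]
    field_simp
  exact (hasSum_mul_left_iff hbeta.ne').mp (hval ▸ hsum)

theorem integral_betaKernel_mul_pFq {c s : ℝ} {l m : List ℝ} (hc : 0 < c) (hs : 0 < s)
    (hl : ∀ p ∈ l, 0 < p) (hm : ∀ q ∈ m, 0 < q) (hsum : Summable (pFqCoeff l ((c + s) :: m))) :
    ∫ x in Ioo (0 : ℝ) 1, betaKernel c s x * pFq l (c :: m) x =
      beta c s * pFq l ((c + s) :: m) 1 := by
  have hcm : ∀ q ∈ c :: m, 0 < q := List.forall_mem_cons.mpr ⟨hc, hm⟩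
  have hterm (n : ℕ) : ∫ x in Ioo (0 : ℝ) 1, pFqCoeff l (c :: m) n * betaKernel (c + n) s x =
      beta c s * pFqCoeff l ((c + s) :: m) n := by
    have := (ris_pos hc n).ne'
    rw [integral_const_mul, integral_betaKernel (by positivity) hs, beta_add_natCast_left hc hs,
      pFqCoeff_cons_right, pFqCoeff_cons_right]
    field_simp
  calc ∫ x in Ioo (0 : ℝ) 1, betaKernel c s x * pFq l (c :: m) x
      = ∫ x in Ioo (0 : ℝ) 1, ∑' n : ℕ, pFqCoeff l (c :: m) n * betaKernel (c + n) s x := by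
        refine setIntegral_congr_fun measurableSet_Ioo fun x hx => ?_
        simp only [pFq_eq_tsum, ← tsum_mul_left, ← betaKernel_mul_pow c s _ hx.1, mul_left_comm]
    _ = ∑' n : ℕ, ∫ x in Ioo (0 : ℝ) 1, pFqCoeff l (c :: m) n * betaKernel (c + n) s x := by
        refine integral_tsum_of_nonneg_of_summable_integral
          (fun n => (integrableOn_betaKernel (by positivity) hs).const_mul _)
          (fun n => ae_restrict_of_forall_mem measurableSet_Ioo fun x hx =>
            mul_nonneg (pFqCoeff_nonneg hl hcm n) (betaKernel_nonneg _ _ hx)) ?_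
        simpa only [hterm] using hsum.mul_left _
    _ = beta c s * pFq l ((c + s) :: m) 1 := by
        simp only [hterm, tsum_mul_left, pFq_eq_tsum, one_pow, mul_one]

/-- The closed form of the moment `∫₀¹ x ^ (c - 1) * (1 - x) ^ (s - 1) * ₂F₁(a, b; c | x) dx`
provided by Euler's integral and Gauss's summation theorem. -/
noncomputable def gaussMoment (a b c s : ℝ) : ℝ :=
  Gamma c * Gamma s * Gamma (c + s - a - b) / (Gamma (c + s - a) * Gamma (c + s - b))

section GaussMoment

variable {a b c s : ℝ}

lemma gaussMoment_pos (ha : 0 < a) (hb : 0 < b) (hc : 0 < c) (hs : 0 < s)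
    (habcs : a + b < c + s) : 0 < gaussMoment a b c s := by
  have := Gamma_pos_of_pos hc
  have := Gamma_pos_of_pos hs
  have := Gamma_pos_of_pos (show 0 < c + s - a by linarith)
  have := Gamma_pos_of_pos (show 0 < c + s - b by linarith)
  have := Gamma_pos_of_pos (show 0 < c + s - a - b by linarith)
  unfold gaussMoment
  positivity

lemma gaussMoment_add_natCast (ha : 0 < a) (hb : 0 < b) (hs : 0 < s) (habcs : a + b < c + s)
    (n : ℕ) : gaussMoment a b c (s + n) =
      gaussMoment a b c s *
        (ris s n * ris (c + s - a - b) n / (ris (c + s - a) n * ris (c + s - b) n)) := by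
  have hΓ (t : ℝ) (ht : 0 < c + s - t) :
      Gamma (c + (s + n) - t) = ris (c + s - t) n * Gamma (c + s - t) := by
    rw [← Gamma_add_natCast ht]
    ring_nf
  have hΓab := hΓ (a + b) (by linarith)
  rw [← sub_sub, ← sub_sub] at hΓab
  rw [gaussMoment, gaussMoment, Gamma_add_natCast hs, hΓab, hΓ a (by linarith), hΓ b (by linarith)]
  ring

lemma integral_betaKernel_mul_pFq_two_one (ha : 0 < a) (hb : 0 < b) (hc : 0 < c) (hs : 0 < s)
    (habcs : a + b < c + s) :
    ∫ x in Ioo (0 : ℝ) 1, betaKernel c s x * pFq [a, b] [c] x = gaussMoment a b c s := by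
  have hgauss := hasSum_pFqCoeff_gauss ha hb habcs
  have hΓ := (Gamma_pos_of_pos (add_pos hc hs)).ne'
  rw [integral_betaKernel_mul_pFq hc hs (by simp [ha, hb]) (by simp) hgauss.summable, pFq_eq_tsum]
  simp only [one_pow, mul_one, hgauss.tsum_eq, beta, gaussMoment]
  field_simp

lemma integrableOn_betaKernel_mul_pFq_two_one (ha : 0 < a) (hb : 0 < b) (hc : 0 < c) (hs : 0 < s)
    (habcs : a + b < c + s) :
    IntegrableOn (fun x => betaKernel c s x * pFq [a, b] [c] x) (Ioo 0 1) := by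
  -- a Bochner integral with a nonzero value cannot be the junk value `0` of a divergent one
  refine Integrable.of_integral_ne_zero ?_
  rw [integral_betaKernel_mul_pFq_two_one ha hb hc hs habcs]
  exact (gaussMoment_pos ha hb hc hs habcs).ne'

end GaussMoment

theorem integral_betaKernel_mul_pFq_mul_pFq_one_sub {a b c s : ℝ} {l m : List ℝ} (ha : 0 < a)
    (hb : 0 < b) (hc : 0 < c) (hs : 0 < s) (habcs : a + b < c + s) (hl : ∀ p ∈ l, 0 < p)
    (hm : ∀ q ∈ m, 0 < q) (hlen : l.length = m.length + 1) (hlm : l.sum < m.sum + c) :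
    ∫ x in Ioo (0 : ℝ) 1, betaKernel c s x * pFq [a, b] [c] x * pFq l m (1 - x) =
      gaussMoment a b c s *
        pFq (s :: (c + s - a - b) :: l) ((c + s - a) :: (c + s - b) :: m) 1 := by
  let f (n : ℕ) (x : ℝ) : ℝ := pFqCoeff l m n * (betaKernel c (s + n) x * pFq [a, b] [c] x)
  have hadd (n : ℕ) : a + b < c + (s + n) := habcs.trans_le (by simp)
  have hterm (n : ℕ) : ∫ x in Ioo (0 : ℝ) 1, f n x = gaussMoment a b c s *
      pFqCoeff (s :: (c + s - a - b) :: l) ((c + s - a) :: (c + s - b) :: m) n := by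
    rw [integral_const_mul, integral_betaKernel_mul_pFq_two_one ha hb hc (by positivity) (hadd n),
      gaussMoment_add_natCast ha hb hs habcs]
    simp only [pFqCoeff_cons_left, pFqCoeff_cons_right]
    ring
  have hsummable :
      Summable (pFqCoeff (s :: (c + s - a - b) :: l) ((c + s - a) :: (c + s - b) :: m)) := by
    refine summable_pFqCoeff ?_ ?_ (by simp [hlen]) ?_
    · simpa only [List.forall_mem_cons] using ⟨hs, by linarith, hl⟩
    · simpa only [List.forall_mem_cons] using ⟨by linarith, by linarith, hm⟩
    · simp only [List.sum_cons]
      linarith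
  calc ∫ x in Ioo (0 : ℝ) 1, betaKernel c s x * pFq [a, b] [c] x * pFq l m (1 - x)
      = ∫ x in Ioo (0 : ℝ) 1, ∑' n, f n x := by
        refine setIntegral_congr_fun measurableSet_Ioo fun x hx => ?_
        simp only [f, ← betaKernel_mul_one_sub_pow c s _ hx.2, pFq_eq_tsum l, ← tsum_mul_left]
        congr! 2
        ring
    _ = ∑' n, ∫ x in Ioo (0 : ℝ) 1, f n x := by
        refine integral_tsum_of_nonneg_of_summable_integral
          (fun n => (integrableOn_betaKernel_mul_pFq_two_one ha hb hc (by positivity)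
            (hadd n)).const_mul _)
          (fun n => ae_restrict_of_forall_mem measurableSet_Ioo fun x hx =>
            mul_nonneg (pFqCoeff_nonneg hl hm n) (mul_nonneg (betaKernel_nonneg _ _ hx)
              (pFq_nonneg (by simp [ha, hb]) (by simp [hc]) hx.1.le))) ?_
        simpa only [hterm] using hsummable.mul_left _
    _ = _ := by
        simp only [hterm, tsum_mul_left, pFq_eq_tsum, one_pow, mul_one]

lemma Gamma_five_sixths_mul_Gamma_seven_sixths : Gamma (5 / 6) * Gamma (7 / 6) = π / 3 := by
  have hreflect : Gamma (1 / 6) * Gamma (5 / 6) = 2 * π := by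
    have hsin := Gamma_mul_Gamma_one_sub (1 / 6)
    rw [mul_one_div, sin_pi_div_six, div_div_eq_mul_div, div_one, mul_comm π] at hsin
    convert hsin using 3
    norm_num
  have hshift : Gamma (7 / 6) = 1 / 6 * Gamma (1 / 6) := by
    rw [← Gamma_add_one (by norm_num)]
    norm_num
  rw [hshift]
  linear_combination hreflect / 6

lemma gaussMoment_one_third_two_thirds_one_one_half :
    gaussMoment (1 / 3) (2 / 3) 1 (1 / 2) = 3 := by
  norm_num [gaussMoment, Gamma_one_half_eq, mul_comm (Gamma (7 / 6)),
    Gamma_five_sixths_mul_Gamma_seven_sixths, mul_self_sqrt pi_pos.le]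

lemma betaKernel_one_one_half {x : ℝ} (hx : x < 1) : betaKernel 1 (1 / 2) x = 1 / √(1 - x) := by
  norm_num [betaKernel, sqrt_eq_rpow, rpow_neg (sub_nonneg.mpr hx.le)]

theorem broadhurst_integral_4F3 :
    (∫ x in (0:ℝ)..1,
        pFq [1/3, 2/3] [1] x * pFq [1/3, 2/3] [1] (1 - x) / Real.sqrt (1 - x))
    = 3 * pFq [1/3, 1/2, 1/2, 2/3] [5/6, 1, 7/6] 1 := by
  calc ∫ x in (0:ℝ)..1, pFq [1/3, 2/3] [1] x * pFq [1/3, 2/3] [1] (1 - x) / √(1 - x)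
      = ∫ x in Ioo (0 : ℝ) 1, betaKernel 1 (1/2) x * pFq [1/3, 2/3] [1] x *
          pFq [1/3, 2/3] [1] (1 - x) := by
        rw [intervalIntegral.integral_of_le zero_le_one, integral_Ioc_eq_integral_Ioo]
        refine setIntegral_congr_fun measurableSet_Ioo fun x hx => ?_
        simp only [betaKernel_one_one_half hx.2]
        ring
    _ = 3 * pFq [1/2, 1/2, 1/3, 2/3] [7/6, 5/6, 1] 1 := by
        rw [integral_betaKernel_mul_pFq_mul_pFq_one_sub,
          gaussMoment_one_third_two_thirds_one_one_half] <;> norm_num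
    _ = 3 * pFq [1/3, 1/2, 1/2, 2/3] [5/6, 1, 7/6] 1 :=
        congrArg (3 * ·) (pFq_congr_perm (List.perm_middle (l₁ := [1/2, 1/2]) (l₂ := [2/3]))
          (List.perm_append_comm (l₁ := [7/6]) (l₂ := [5/6, 1])) 1)
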